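/- Let K be a field of characteristic p > 0 and K' a purely inseparable extension of K of degree p. Set E = K'/K, a K-vector space of dimension p−1, and let I be the kernel of the multiplication map K' ⊗_K K' → K', a ⊗ b ↦ ab. Then: (1) the composite K-linear map φ : I → K' ⊗_K K' → E ⊗_K K' is bijective, where K' ⊗_K K' and E ⊗_K K' are regarded as K'-modules via the right factor; (2) setting Fil_i = φ(I^{i+1}) for i = 0, …, p−1, the Fil_i form a decreasing filtration of E ⊗_K K' with Fil_{p−1} = 0 and Fil_0 = E ⊗_K K', and for every K-subspace V ⊆ E of dimension n, the natural map V ⊗_K K' → (E ⊗_K K')/Fil_n is injective. -/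

import Mathlib

/-!
The exact sequence `0 → K → K' → E → 0` tensored with `K'` shows that `ψ` is surjective with kernel
`1 ⊗ K'`. Multiplication `μ : K' ⊗ K' → K'` restricts to an isomorphism on `1 ⊗ K'`, so
`t ↦ t - 1 ⊗ μ t` shows that `I = ker μ` is a complement of `1 ⊗ K'`, whence `φ` is bijective.

For the injectivity of `V ⊗ K' → (E ⊗ K') / Fil_n`, lift a basis of `V` to `v₁, …, vₙ ∈ K'`; then
`1, v₁, …, vₙ` are linearly independent over `K`, and the claim becomes: if `w₀, …, wₙ` are linearly
independent and `∑ wⱼ ⊗ cⱼ ∈ I ^ (n + 1)`, then all `cⱼ` vanish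
(`eq_zero_of_sum_tmul_mem_pow`). This is proved by a Wronskian-type argument. Since `K'/K` is
inseparable of prime degree, there is a `K`-derivation `D` of `K'` whose field of constants is
exactly `K` (`exists_derivation`). The derivation `1 ⊗ D` maps `I ^ (m + 1)` into `I ^ m`. If some
`cⱼ` is nonzero, normalise it to `1`; applying `1 ⊗ D` kills that term, so by induction all `cⱼ`
are constants, and applying `μ` then gives a linear relation between the `wⱼ`.

The vanishing of `Fil_{p-1}` is the case `V = E` of the injectivity.
-/


universe u

open TensorProduct

namespace PurelyInseparableFiltration

variable (K K' : Type u) [Field K] [Field K'] [Algebra K K']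

/-- `E = K'/K`, the quotient `K`-vector space. -/
abbrev E : Type u := K' ⧸ (Submodule.span K ({1} : Set K'))

/-- the `K`-linear map `K' ⊗_K K' → E ⊗_K K'` given by the quotient map `K' → E = K'/K`
on the left factor and the identity on the right factor -/
noncomputable def ψ : K' ⊗[K] K' →ₗ[K] E K K' ⊗[K] K' :=
  TensorProduct.map (Submodule.mkQ (Submodule.span K ({1} : Set K')))
    (LinearMap.id : K' →ₗ[K] K')

/-- the kernel `I` of the multiplication map `K' ⊗_K K' → K'`, `a ⊗ b ↦ ab`, as an
ideal of `K' ⊗_K K'` -/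
noncomputable def I : Ideal (K' ⊗[K] K') :=
  RingHom.ker (Algebra.TensorProduct.lmul' K (S := K'))

/-- the composite `K`-linear map `φ : I → K' ⊗_K K' → E ⊗_K K'` -/
noncomputable def φ : (Submodule.restrictScalars K (I K K')) →ₗ[K] E K K' ⊗[K] K' :=
  (ψ K K') ∘ₗ (Submodule.restrictScalars K (I K K')).subtype

/-- `Fil_i = φ(I^{i+1})`, a `K`-subspace of `E ⊗_K K'` -/
noncomputable def Fil (i : ℕ) : Submodule K (E K K' ⊗[K] K') :=
  Submodule.map (ψ K K') (Submodule.restrictScalars K ((I K K') ^ (i + 1)))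

/-- An additive map satisfying the Leibniz rule lowers the order of vanishing along an ideal by at
most one. -/
lemma map_mem_pow_of_leibniz {R : Type*} [CommRing R] (J : Ideal R) (δ : R →+ R)
    (hδ : ∀ a b, δ (a * b) = a * δ b + b * δ a) (m : ℕ) :
    ∀ t ∈ J ^ (m + 1), δ t ∈ J ^ m := by
  induction m with
  | zero => intro t _; simp
  | succ m ih =>
    intro t ht
    rw [pow_succ] at ht
    refine Submodule.mul_induction_on ht ?_ ?_
    · intro a ha b hb
      rw [hδ]
      refine add_mem (Ideal.mul_mem_right _ _ ha) ?_
      rw [pow_succ, mul_comm b]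
      exact Ideal.mul_mem_mul (ih a ha) hb
    · intro x y hx hy
      rw [map_add]
      exact add_mem hx hy

lemma leibniz_lTensor (D : Derivation K K' K') (a b : K' ⊗[K] K') :
    D.toLinearMap.lTensor K' (a * b) =
      a * D.toLinearMap.lTensor K' b + b * D.toLinearMap.lTensor K' a := by
  induction a with
  | zero => simp
  | add a₁ a₂ h₁ h₂ => simp only [add_mul, map_add, h₁, h₂, mul_add]; ring
  | tmul x y =>
    induction b with
    | zero => simp
    | add b₁ b₂ h₁ h₂ => simp only [add_mul, map_add, h₁, h₂, mul_add]; ring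
    | tmul z w =>
      simp [TensorProduct.tmul_add, mul_comm z x]

/-- The nonzero derivations of `K'` exist because `Ω[K'⁄K]` vanishes only for separable extensions;
the constants of such a derivation form a proper subalgebra, which is `K` since the degree is
prime. -/
lemma exists_derivation (p : ℕ) (hp : p.Prime) [IsPurelyInseparable K K']
    (hdeg : Module.finrank K K' = p) :
    ∃ D : Derivation K K' K', ∀ x, D x = 0 → ∃ k : K, algebraMap K K' k = x := by
  have : FiniteDimensional K K' := Module.finite_of_finrank_pos (hdeg ▸ hp.pos)
  have hns : ¬ Algebra.IsSeparable K K' := by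
    intro h
    have hb := IsPurelyInseparable.bijective_algebraMap_of_isSeparable K K'
    have := (LinearEquiv.ofBijective (Algebra.linearMap K K') hb).finrank_eq
    rw [Module.finrank_self, hdeg] at this
    exact hp.one_lt.ne this
  have hnt : ¬ Subsingleton (Ω[K'⁄K]) := fun h ↦
    hns ((Algebra.FormallyUnramified.iff_isSeparable K K').1 ⟨h⟩)
  rw [not_subsingleton_iff_nontrivial] at hnt
  obtain ⟨ω, hω⟩ := exists_ne (0 : Ω[K'⁄K])
  obtain ⟨f, hf⟩ : ∃ f : Module.Dual K' (Ω[K'⁄K]), f ω ≠ 0 := by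
    by_contra! h
    exact hω ((Module.forall_dual_apply_eq_zero_iff K' ω).1 h)
  let D : Derivation K K' K' := f.compDer (KaehlerDifferential.D K K')
  have hD : ∃ x, D x ≠ 0 := by
    by_contra! h
    have hD0 : D = 0 := Derivation.ext h
    have : f = 0 := (KaehlerDifferential.linearMapEquivDerivation K K').injective (by
      rw [map_zero]; exact hD0)
    exact hf (by simp [this])
  let S : Subalgebra K K' :=
    { carrier := {x | D x = 0}
      mul_mem' := by
        intro a b ha hb
        simp only [Set.mem_ofPred_eq] at ha hb ⊢
        simp [ha, hb]
      add_mem' := by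
        intro a b ha hb
        simp only [Set.mem_ofPred_eq] at ha hb ⊢
        simp [ha, hb]
      algebraMap_mem' := fun k ↦ D.map_algebraMap k }
  have := Subalgebra.isSimpleOrder_of_finrank_prime K K' (hdeg ▸ hp)
  refine ⟨D, fun x hx ↦ ?_⟩
  rcases eq_bot_or_eq_top S with h | h
  · have hxS : x ∈ S := hx
    rw [h] at hxS
    exact Algebra.mem_bot.1 hxS
  · obtain ⟨y, hy⟩ := hD
    have hyS : y ∈ S := h ▸ Algebra.mem_top
    exact absurd hyS hy

/-- If the constants of `D` are `K`, then for any `m` elements `wⱼ` of `K'` linearly independent over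
`K`, the `wⱼ ⊗ 1` are linearly independent over the right factor `K'` in `(K' ⊗ K') / I ^ m`. -/
lemma eq_zero_of_sum_tmul_mem_pow (D : Derivation K K' K')
    (hD : ∀ x, D x = 0 → ∃ k : K, algebraMap K K' k = x)
    {ι : Type*} (w : ι → K') (hw : LinearIndependent K w) (m : ℕ) :
    ∀ (s : Finset ι) (c : ι → K'), s.card = m →
      ∑ j ∈ s, w j ⊗ₜ[K] c j ∈ (I K K') ^ m → ∀ j ∈ s, c j = 0 := by
  classical
  induction m with
  | zero =>
    intro s c hs _ j hj
    simp [Finset.card_eq_zero.1 hs] at hj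
  | succ m ih =>
    intro s c hs hmem
    by_contra! hcon
    obtain ⟨j₀, hj₀, hc⟩ := hcon
    -- Normalise the coefficient of `w j₀` to `1`.
    let d : ι → K' := fun j ↦ c j * (c j₀)⁻¹
    have hd₀ : d j₀ = 1 := mul_inv_cancel₀ hc
    have hmem' : ∑ j ∈ s, w j ⊗ₜ[K] d j ∈ (I K K') ^ (m + 1) := by
      have := Ideal.mul_mem_right ((1 : K') ⊗ₜ[K] (c j₀)⁻¹) _ hmem
      simpa [Finset.sum_mul, d] using this
    have hder := map_mem_pow_of_leibniz (I K K') (D.toLinearMap.lTensor K').toAddMonoidHom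
      (leibniz_lTensor K K' D) m _ hmem'
    have hder' : ∑ j ∈ s.erase j₀, w j ⊗ₜ[K] D (d j) ∈ (I K K') ^ m := by
      rw [Finset.sum_erase _ (by simp [hd₀])]
      simpa using hder
    have hcard : (s.erase j₀).card = m := by rw [Finset.card_erase_of_mem hj₀, hs]; rfl
    have hz := ih _ _ hcard hder'
    have hconst : ∀ j ∈ s, ∃ k : K, algebraMap K K' k = d j := by
      intro j hj
      by_cases h : j = j₀
      · exact ⟨1, by rw [h, hd₀, map_one]⟩
      · exact hD _ (hz j (Finset.mem_erase.2 ⟨h, hj⟩))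
    choose! k hk using hconst
    have hI : ∑ j ∈ s, w j ⊗ₜ[K] d j ∈ I K K' := Ideal.pow_le_self (Nat.succ_ne_zero m) hmem'
    have hsum : ∑ j ∈ s, k j • w j = 0 := by
      have h0 : Algebra.TensorProduct.lmul' K (S := K') (∑ j ∈ s, w j ⊗ₜ[K] d j) = 0 := hI
      rw [map_sum] at h0
      rw [← h0]
      refine Finset.sum_congr rfl fun j hj ↦ ?_
      rw [Algebra.TensorProduct.lmul'_apply_tmul, ← hk j hj, Algebra.smul_def, mul_comm]
    have hk₀ := linearIndependent_iff'.1 hw s k hsum j₀ hj₀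
    have := hk j₀ hj₀
    rw [hk₀, hd₀, map_zero] at this
    exact zero_ne_one this

lemma ψ_surjective : Function.Surjective (ψ K K') :=
  LinearMap.rTensor_surjective K' (Submodule.mkQ_surjective _)

lemma ψ_one_tmul (c : K') : ψ K K' (1 ⊗ₜ c) = 0 := by
  have : (Submodule.Quotient.mk (1 : K') : E K K') = 0 :=
    (Submodule.Quotient.mk_eq_zero _).2 (Submodule.mem_span_singleton_self 1)
  simp [ψ, this]

lemma exists_of_ψ_eq_zero (t : K' ⊗[K] K') (ht : ψ K K' t = 0) : ∃ c : K', t = 1 ⊗ₜ c := by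
  have h : t ∈ LinearMap.ker
      (LinearMap.rTensor K' (Submodule.mkQ (Submodule.span K ({1} : Set K')))) := ht
  rw [rTensor_mkQ] at h
  obtain ⟨u, rfl⟩ := h
  clear ht
  induction u with
  | zero => exact ⟨0, by simp⟩
  | add x y hx hy =>
    obtain ⟨a, ha⟩ := hx
    obtain ⟨b, hb⟩ := hy
    exact ⟨a + b, by rw [map_add, ha, hb, TensorProduct.tmul_add]⟩
  | tmul x y =>
    obtain ⟨k, hk⟩ := Submodule.mem_span_singleton.1 x.2
    exact ⟨k • y, by simp [← hk, TensorProduct.smul_tmul]⟩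

lemma sub_mem_I (t : K' ⊗[K] K') :
    t - 1 ⊗ₜ[K] Algebra.TensorProduct.lmul' K (S := K') t ∈ I K K' := by
  simp [I, RingHom.mem_ker]

lemma φ_bijective : Function.Bijective (φ K K') := by
  refine ⟨(injective_iff_map_eq_zero _).2 ?_, ?_⟩
  · rintro ⟨t, ht⟩ h
    obtain ⟨c, rfl⟩ := exists_of_ψ_eq_zero K K' t h
    have h0 : Algebra.TensorProduct.lmul' K (S := K') (1 ⊗ₜ[K] c) = 0 := ht
    rw [Algebra.TensorProduct.lmul'_apply_tmul, one_mul] at h0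
    simp [h0]
  · intro e
    obtain ⟨t, rfl⟩ := ψ_surjective K K' e
    refine ⟨⟨_, sub_mem_I K K' t⟩, ?_⟩
    change ψ K K' (t - 1 ⊗ₜ[K] Algebra.TensorProduct.lmul' K (S := K') t) = _
    rw [map_sub, ψ_one_tmul, sub_zero]

lemma mkQ_comp_injective [FiniteDimensional K K'] (D : Derivation K K' K')
    (hD : ∀ x, D x = 0 → ∃ k : K, algebraMap K K' k = x) (V : Submodule K (E K K')) :
    Function.Injective
      ((Fil K K' (Module.finrank K V)).mkQ ∘ₗ
        TensorProduct.map V.subtype (LinearMap.id : K' →ₗ[K] K')) := by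
  let b := Module.finBasis K V
  choose v hv using fun i ↦ Submodule.mkQ_surjective _ (b i : E K K')
  have hbE : LinearIndependent K fun i ↦ (b i : E K K') :=
    b.linearIndependent.map' V.subtype V.ker_subtype
  have hvli : LinearIndependent K v := by
    refine LinearIndependent.of_comp (Submodule.mkQ (Submodule.span K ({1} : Set K'))) ?_
    rwa [show (Submodule.mkQ (Submodule.span K ({1} : Set K'))) ∘ v = fun i ↦ (b i : E K K')
      from funext hv]
  have hmk1 : Submodule.mkQ (Submodule.span K ({1} : Set K')) 1 = 0 :=
    (Submodule.Quotient.mk_eq_zero _).2 (Submodule.mem_span_singleton_self 1)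
  have hwli : LinearIndependent K (Fin.cons 1 v : Fin (_ + 1) → K') := by
    refine linearIndependent_finCons.2 ⟨hvli, fun h ↦ ?_⟩
    obtain ⟨a, ha⟩ := (Submodule.mem_span_range_iff_exists_fun K).1 h
    have ha' := congrArg (Submodule.mkQ (Submodule.span K ({1} : Set K'))) ha
    simp only [map_sum, map_smul, hv, hmk1] at ha'
    have ha0 := Fintype.linearIndependent_iff.1 hbE a ha'
    simp [ha0] at ha
  refine (injective_iff_map_eq_zero _).2 fun x hx ↦ ?_
  obtain ⟨c, rfl⟩ := (TensorProduct.equivFinsuppOfBasisLeft b).symm.surjective x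
  rw [TensorProduct.equivFinsuppOfBasisLeft_symm_apply,
    Finsupp.sum_fintype _ _ (by simp)] at hx ⊢
  rw [LinearMap.comp_apply, Submodule.mkQ_apply, Submodule.Quotient.mk_eq_zero] at hx
  obtain ⟨t, ht, hxt⟩ := hx
  have hψ : ψ K K' (t - ∑ i, v i ⊗ₜ[K] c i) = 0 := by
    rw [map_sub, hxt, sub_eq_zero]
    simp only [map_sum, ψ, TensorProduct.map_tmul, hv, Submodule.subtype_apply]
  obtain ⟨c₀, hc₀⟩ := exists_of_ψ_eq_zero K K' _ hψ
  have hmem : ∑ j, (Fin.cons 1 v : Fin (_ + 1) → K') j ⊗ₜ[K]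
      (Fin.cons c₀ c : Fin (_ + 1) → K') j ∈ (I K K') ^ (Module.finrank K V + 1) := by
    rw [Fin.sum_univ_succ]
    simp only [Fin.cons_zero, Fin.cons_succ]
    rw [← hc₀, sub_add_cancel]
    exact ht
  have hz := eq_zero_of_sum_tmul_mem_pow K K' D hD _ hwli _ Finset.univ _ (by simp) hmem
  refine Finset.sum_eq_zero fun i _ ↦ ?_
  have := hz i.succ (Finset.mem_univ _)
  rw [Fin.cons_succ] at this
  rw [this, TensorProduct.tmul_zero]

/-- Let `K` be a field of characteristic `p > 0` and `K'` a purely inseparable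
extension of `K` of degree `p`.  Set `E = K'/K` (a `K`-vector space of dimension
`p - 1`) and let `I` be the kernel of the multiplication map `K' ⊗_K K' → K'`.  Then:
(1) the composite `K`-linear map `φ : I → K' ⊗_K K' → E ⊗_K K'` is bijective;
(2) the subspaces `Fil_i = φ(I^{i+1})`, `i = 0, …, p - 1`, form a decreasing filtration
of `E ⊗_K K'` with `Fil_{p-1} = 0` and `Fil_0 = E ⊗_K K'`, and for every `K`-subspace
`V ⊆ E` of dimension `n` the natural map `V ⊗_K K' → (E ⊗_K K')/Fil_n` is injective. -/
theorem bijective_and_filtration (p : ℕ) (hp : p.Prime) [CharP K p]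
    [IsPurelyInseparable K K'] (hdeg : Module.finrank K K' = p) :
    Function.Bijective (φ K K') ∧
      (∀ i j : ℕ, i ≤ j → Fil K K' j ≤ Fil K K' i) ∧
      Fil K K' (p - 1) = ⊥ ∧
      Fil K K' 0 = ⊤ ∧
      ∀ V : Submodule K (E K K'),
        Function.Injective
          ((Fil K K' (Module.finrank K V)).mkQ ∘ₗ
            TensorProduct.map V.subtype (LinearMap.id : K' →ₗ[K] K')) := by
  have : FiniteDimensional K K' := Module.finite_of_finrank_pos (hdeg ▸ hp.pos)
  obtain ⟨D, hD⟩ := exists_derivation K K' p hp hdeg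
  have hinj := mkQ_comp_injective K K' D hD
  refine ⟨φ_bijective K K', fun i j hij ↦ ?_, ?_, ?_, hinj⟩
  · exact Submodule.map_mono fun t ht ↦ Ideal.pow_le_pow_right (Nat.succ_le_succ hij) ht
  · have hE : Module.finrank K (⊤ : Submodule K (E K K')) = p - 1 := by
      have h := Submodule.finrank_quotient_add_finrank (Submodule.span K ({1} : Set K'))
      rw [finrank_span_singleton one_ne_zero, hdeg] at h
      rw [finrank_top]
      exact Nat.eq_sub_of_add_eq h
    have htop := hinj ⊤
    rw [hE] at htop
    refine (Submodule.eq_bot_iff _).2 fun x hx ↦ ?_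
    obtain ⟨y, rfl⟩ : ∃ y, TensorProduct.map (⊤ : Submodule K (E K K')).subtype
        (LinearMap.id : K' →ₗ[K] K') y = x :=
      TensorProduct.map_surjective (fun e ↦ ⟨⟨e, trivial⟩, rfl⟩) Function.surjective_id x
    have hy : y = 0 := (injective_iff_map_eq_zero _).1 htop y (by
      rw [LinearMap.comp_apply, Submodule.mkQ_apply, Submodule.Quotient.mk_eq_zero]
      exact hx)
    rw [hy, map_zero]
  · refine eq_top_iff.2 fun e _ ↦ ?_
    obtain ⟨⟨t, ht⟩, rfl⟩ := (φ_bijective K K').2 e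
    refine ⟨t, ?_, rfl⟩
    simpa using ht

end PurelyInseparableFiltration
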